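/- Let m ≥ 2. The function R ↦ μ_1(B_R) is strictly decreasing on (0, ∞): for all 0 < a < b one has μ_1(B_b) < μ_1(B_a). -/

import Mathlib

open MeasureTheory Real Set

noncomputable section

/-- A trial function for the radial variational problem on the ball of radius
`R`: `φ ∈ C¹([0,R])` (with derivative `φ'`), `φ(0) = 0`, `φ'(R) = 0`, and `φ`
not identically zero on `[0,R]`. -/
def IsRadialTrial (R : ℝ) (φ φ' : ℝ → ℝ) : Prop :=
  (∀ r ∈ Icc (0 : ℝ) R, HasDerivWithinAt φ (φ' r) (Icc (0 : ℝ) R) r) ∧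
  ContinuousOn φ' (Icc (0 : ℝ) R) ∧
  φ 0 = 0 ∧ φ' R = 0 ∧ ∃ r ∈ Icc (0 : ℝ) R, φ r ≠ 0

/-- The first nonzero Neumann eigenvalue `μ₁(B_R)` of the Ornstein–Uhlenbeck
operator on the origin-centered ball `B_R ⊆ ℝ^m`, via its radial variational
characterization:
`μ₁(B_R) = inf { ∫₀^R (φ'² + (m-1)φ²/r²) e^{-r²/2} r^{m-1} dr
              / ∫₀^R φ² e^{-r²/2} r^{m-1} dr }`
over `φ ∈ C¹([0,R])` with `φ(0) = 0`, `φ'(R) = 0`, `φ ≢ 0`. -/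
def mu1Ball (m : ℕ) (R : ℝ) : ℝ :=
  sInf { q : ℝ | ∃ φ φ' : ℝ → ℝ, IsRadialTrial R φ φ' ∧
    q = (∫ r in Ioo (0 : ℝ) R,
          (φ' r ^ 2 + ((m : ℝ) - 1) * φ r ^ 2 / r ^ 2) *
            Real.exp (-r ^ 2 / 2) * r ^ (m - 1)) /
        (∫ r in Ioo (0 : ℝ) R,
          φ r ^ 2 * Real.exp (-r ^ 2 / 2) * r ^ (m - 1)) }


def wt (n : ℕ) (t : ℝ) : ℝ := |t| ^ n * Real.exp (-t ^ 2 / 2)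

def VV (n : ℕ) (r : ℝ) : ℝ := ∫ t in (0 : ℝ)..r, wt n t

def KK (n : ℕ) (r : ℝ) : ℝ := ∫ u in (0 : ℝ)..1, |u| ^ n * Real.exp (-(r * u) ^ 2 / 2)

lemma wt_cont (n : ℕ) : Continuous (wt n) := by
  unfold wt; fun_prop

lemma wt_pos (n : ℕ) {t : ℝ} (ht : t ≠ 0) : 0 < wt n t := by
  unfold wt; have := abs_pos.2 ht; positivity

lemma VV_deriv (n : ℕ) (r : ℝ) : HasDerivAt (VV n) (wt n r) r :=
  intervalIntegral.integral_hasDerivAt_right ((wt_cont n).intervalIntegrable _ _)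
    ((wt_cont n).stronglyMeasurableAtFilter _ _) (wt_cont n).continuousAt

lemma VV_cont (n : ℕ) : Continuous (VV n) :=
  continuous_iff_continuousAt.2 fun r => (VV_deriv n r).continuousAt

lemma VV_zero (n : ℕ) : VV n 0 = 0 := by simp [VV]

lemma VV_strictMono (n : ℕ) : StrictMono (VV n) := by
  have h1 : StrictMonoOn (VV n) (Iic 0) := by
    apply strictMonoOn_of_deriv_pos (convex_Iic _) (VV_cont n).continuousOn
    intro x hx
    rw [interior_Iic] at hx
    rw [(VV_deriv n x).deriv]
    exact wt_pos n (ne_of_lt hx)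
  have h2 : StrictMonoOn (VV n) (Ici 0) := by
    apply strictMonoOn_of_deriv_pos (convex_Ici _) (VV_cont n).continuousOn
    intro x hx
    rw [interior_Ici] at hx
    rw [(VV_deriv n x).deriv]
    exact wt_pos n (ne_of_gt hx)
  exact h1.Iic_union_Ici h2

lemma KK_cont (n : ℕ) : Continuous (KK n) := by
  unfold KK
  apply intervalIntegral.continuous_parametric_intervalIntegral_of_continuous'
  fun_prop

lemma KK_pos (n : ℕ) (r : ℝ) : 0 < KK n r := by
  apply intervalIntegral.integral_pos zero_lt_one
  · fun_prop
  · intro x _; positivity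
  · exact ⟨1, by simp, by positivity⟩

lemma VV_eq (n : ℕ) (r : ℝ) : VV n r = r * |r| ^ n * KK n r := by
  have h := intervalIntegral.mul_integral_comp_mul_left (f := wt n) (a := 0) (b := 1) (c := r)
  rw [mul_zero, mul_one] at h
  unfold VV KK
  rw [← h, mul_assoc, ← intervalIntegral.integral_const_mul (|r| ^ n)]
  congr 1
  apply intervalIntegral.integral_congr
  intro x _
  simp only [wt, abs_mul, mul_pow]
  ring

lemma KK_anti (n : ℕ) {s r : ℝ} (hs : 0 ≤ s) (h : s ≤ r) : KK n r ≤ KK n s := by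
  apply intervalIntegral.integral_mono_on zero_le_one
  · exact Continuous.intervalIntegrable (by fun_prop) _ _
  · exact Continuous.intervalIntegrable (by fun_prop) _ _
  · intro u hu
    have : (s * u) ^ 2 ≤ (r * u) ^ 2 := by
      have := hu.1
      gcongr
    gcongr

lemma KK_mono (n : ℕ) {s r : ℝ} (hs : 0 ≤ s) (h : s ≤ r) :
    Real.exp (-r ^ 2 / 2) * KK n s ≤ Real.exp (-s ^ 2 / 2) * KK n r := by
  unfold KK
  rw [← intervalIntegral.integral_const_mul, ← intervalIntegral.integral_const_mul]
  apply intervalIntegral.integral_mono_on zero_le_one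
  · exact Continuous.intervalIntegrable (by fun_prop) _ _
  · exact Continuous.intervalIntegrable (by fun_prop) _ _
  · intro u hu
    have e : ∀ x y z : ℝ, Real.exp x * (z * Real.exp y) = z * Real.exp (x + y) := by
      intro x y z; rw [Real.exp_add]; ring
    rw [e, e]
    have h1 : u ^ 2 ≤ 1 := pow_le_one₀ hu.1 hu.2
    have h2 : s ^ 2 ≤ r ^ 2 := by gcongr
    have : -r ^ 2 / 2 + -(s * u) ^ 2 / 2 ≤ -s ^ 2 / 2 + -(r * u) ^ 2 / 2 := by
      nlinarith [mul_nonneg (sub_nonneg.2 h1) (sub_nonneg.2 h2)]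
    gcongr

lemma exists_transport (n : ℕ) {a b : ℝ} (ha : 0 < a) (hab : a < b) :
    ∃ (s g : ℝ → ℝ) (lam c : ℝ), 0 < lam ∧ 0 < c ∧ c < 1 ∧ Continuous g ∧
      (∀ r, HasDerivAt s (g r) r) ∧ s 0 = 0 ∧ s b = a ∧ StrictMono s ∧
      ∀ r, 0 < r → 0 < g r ∧ g r ≤ c ∧ s r ≤ c * r ∧
        r ^ n * Real.exp (-r ^ 2 / 2) = lam * ((s r) ^ n * Real.exp (-(s r) ^ 2 / 2)) * g r := by
  have hVa : 0 < VV n a := by rw [← VV_zero n]; exact VV_strictMono n ha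
  have hVab : VV n a < VV n b := VV_strictMono n hab
  set lam := VV n b / VV n a with hlam
  have hl1 : 1 < lam := (one_lt_div hVa).2 hVab
  have hl0 : 0 < lam := by linarith
  have hex : ∀ r, ∃ s, lam * VV n s = VV n r := by
    intro r
    have h1 : VV n r / lam ∈ uIcc (VV n 0) (VV n r) := by
      rw [VV_zero, mem_uIcc]
      rcases le_total 0 (VV n r) with h | h
      · left
        exact ⟨by positivity, div_le_self h hl1.le⟩
      · right
        constructor
        · rw [le_div_iff₀ hl0]; nlinarith
        · exact div_nonpos_of_nonpos_of_nonneg h hl0.le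
    obtain ⟨s, -, hs⟩ := intermediate_value_uIcc (VV_cont n).continuousOn h1
    exact ⟨s, by rw [hs]; field_simp⟩
  choose s hs using hex
  have hinj := (VV_strictMono n).injective
  have hs0 : s 0 = 0 := by
    apply hinj
    have := hs 0
    rw [VV_zero] at this ⊢
    rcases mul_eq_zero.1 this with h | h
    · linarith
    · exact h
  have hsb : s b = a := by
    apply hinj
    have := hs b
    apply mul_left_cancel₀ hl0.ne'
    rw [this, hlam]; field_simp
  have hsm : StrictMono s := by
    intro x y hxy
    rw [← (VV_strictMono n).lt_iff_lt]
    have := VV_strictMono n hxy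
    rw [← hs x, ← hs y] at this
    exact lt_of_mul_lt_mul_left this hl0.le
  have hsc : Continuous s := by
    rw [continuous_iff_continuousAt]
    intro r
    have hc : Filter.Tendsto (fun x => VV n (s x)) (nhds r) (nhds (VV n (s r))) := by
      have e : ∀ x, VV n (s x) = VV n x / lam := by
        intro x; rw [← hs x]; field_simp
      simp only [e]
      exact ((VV_cont n).div_const _).continuousAt
    refine tendsto_order.2 ⟨fun lo hlo => ?_, fun hi hhi => ?_⟩
    · filter_upwards [hc.eventually (lt_mem_nhds (VV_strictMono n hlo))] with x hx
      exact (VV_strictMono n).lt_iff_lt.1 hx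
    · filter_upwards [hc.eventually (gt_mem_nhds (VV_strictMono n hhi))] with x hx
      exact (VV_strictMono n).lt_iff_lt.1 hx
  have hsne : ∀ r, r ≠ 0 → s r ≠ 0 := by
    intro r hr h
    exact hr (hsm.injective (h.trans hs0.symm))
  let g : ℝ → ℝ := fun r => (lam * KK n (s r) / KK n r) ^ ((n : ℝ) / (n + 1)) *
    Real.exp ((s r ^ 2 - r ^ 2) / 2) / lam
  have hgc : Continuous g := by
    have h1 := KK_cont n
    have h2 : Continuous fun r => lam * KK n (s r) / KK n r :=
      (continuous_const.mul (h1.comp hsc)).div h1 fun r => (KK_pos n r).ne'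
    refine Continuous.div_const (Continuous.mul ?_ ?_) _
    · exact h2.rpow_const fun r => Or.inr (by positivity)
    · fun_prop
  have hgpos : ∀ r, 0 < g r := by
    intro r
    have := KK_pos n r
    have := KK_pos n (s r)
    positivity
  have hrel : ∀ r, lam * (|s r| ^ (n + 1) * KK n (s r)) = |r| ^ (n + 1) * KK n r := by
    intro r
    have h := congrArg abs (hs r)
    rw [VV_eq, VV_eq] at h
    simp only [abs_mul, abs_pow, abs_abs, abs_of_pos (KK_pos n _), abs_of_pos hl0] at h
    rw [pow_succ, pow_succ]
    linarith
  have hgw : ∀ r, r ≠ 0 → g r = wt n r / (lam * wt n (s r)) := by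
    intro r hr
    have h1 := abs_pos.2 hr
    have h2 := abs_pos.2 (hsne r hr)
    have h3 := KK_pos n r
    have h4 := KK_pos n (s r)
    have e : lam * KK n (s r) / KK n r = (|r| / |s r|) ^ (n + 1) := by
      rw [div_pow, div_eq_div_iff h3.ne' (by positivity)]
      linarith [hrel r]
    have e2 : (lam * KK n (s r) / KK n r) ^ ((n : ℝ) / (n + 1)) = (|r| / |s r|) ^ n := by
      rw [e, ← Real.rpow_natCast, ← Real.rpow_mul (by positivity), ← Real.rpow_natCast]
      congr 1
      push_cast
      field_simp
    have e3 : Real.exp ((s r ^ 2 - r ^ 2) / 2) =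
        Real.exp (-r ^ 2 / 2) / Real.exp (-(s r) ^ 2 / 2) := by
      rw [← Real.exp_sub]; congr 1; ring
    simp only [g, wt]
    rw [e2, e3, div_pow]
    field_simp
  have hd1 : ∀ r, r ≠ 0 → HasDerivAt s (g r) r := by
    intro r hr
    have h1 : HasDerivAt (fun x => lam * VV n x) (lam * wt n (s r)) (s r) :=
      (VV_deriv n (s r)).const_mul lam
    have hne : lam * wt n (s r) ≠ 0 := (mul_pos hl0 (wt_pos n (hsne r hr))).ne'
    have hv := VV_deriv n r
    have hlin : HasDerivAt (fun y => s ((fun x => x) y)) (g r) r := by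
      rw [hasDerivAt_iff_tendsto_slope]
      have hts : Filter.Tendsto s (nhdsWithin r {r}ᶜ) (nhdsWithin (s r) {s r}ᶜ) := by
        apply tendsto_nhdsWithin_of_tendsto_nhds_of_eventually_within
        · exact hsc.continuousAt.tendsto.mono_left nhdsWithin_le_nhds
        · filter_upwards [self_mem_nhdsWithin] with x hx
          exact fun h => hx (hsm.injective h)
      have t1 := (hasDerivAt_iff_tendsto_slope.1 h1).comp hts
      have t2 := (hasDerivAt_iff_tendsto_slope.1 hv)
      have t3 := t2.div t1 hne
      rw [hgw r hr]
      refine t3.congr' ?_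
      filter_upwards [self_mem_nhdsWithin] with x hx
      have hx1 : x - r ≠ 0 := sub_ne_zero.2 hx
      have hx2 : s x - s r ≠ 0 := sub_ne_zero.2 fun h => hx (hsm.injective h)
      have hx3 : VV n x - VV n r ≠ 0 := sub_ne_zero.2 fun h => hx (hinj h)
      simp only [Pi.div_apply, Function.comp, slope_def_field, hs]
      field_simp
    exact hlin
  have hd : ∀ r, HasDerivAt s (g r) r := by
    intro r
    by_cases hr : r = 0
    · subst hr
      exact hasDerivAt_of_hasDerivAt_of_ne (fun y hy => hd1 y hy) hsc.continuousAt hgc.continuousAt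
    · exact hd1 r hr
  have hli : (1 / lam) < 1 := by rw [div_lt_one hl0]; exact hl1
  let c : ℝ := (1 / lam) ^ ((1 : ℝ) / ((n + 1 : ℕ) : ℝ))
  have hc0 : 0 < c := by positivity
  have hcp : c ^ (n + 1) = 1 / lam := by
    simp only [c, one_div ((n + 1 : ℕ) : ℝ)]
    exact Real.rpow_inv_natCast_pow (by positivity) (by omega)
  have hc1 : c < 1 := Real.rpow_lt_one (by positivity) hli (by positivity)
  refine ⟨s, g, lam, c, hl0, hc0, hc1, hgc, hd, hs0, hsb, hsm, fun r hr => ?_⟩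
  have hsr : 0 < s r := by rw [← hs0]; exact hsm hr
  have h3 := KK_pos n r
  have h4 := KK_pos n (s r)
  have hsle : s r ≤ r := by
    rw [← (VV_strictMono n).le_iff_le, ← hs r]
    have : 0 < VV n (s r) := by rw [← VV_zero n]; exact VV_strictMono n hsr
    nlinarith
  have hR := hrel r
  rw [abs_of_pos hr, abs_of_pos hsr] at hR
  have hG := hgw r hr.ne'
  simp only [wt, abs_of_pos hr, abs_of_pos hsr] at hG
  have hsc' : s r ≤ c * r := by
    refine le_of_pow_le_pow_left₀ (n := n + 1) (by omega) (by positivity) ?_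
    rw [mul_pow, hcp, one_div, ← div_eq_inv_mul, le_div_iff₀ hl0]
    have := KK_anti n hsr.le hsle
    have h5 : (s r ^ (n+1) * lam) * KK n (s r) ≤ r ^ (n+1) * KK n (s r) := by
      have : r ^ (n+1) * KK n r ≤ r ^ (n+1) * KK n (s r) := by gcongr
      linarith
    exact le_of_mul_le_mul_right h5 h4
  have hgs : g r ≤ s r / r := by
    rw [hG, div_le_div_iff₀ (by positivity) hr]
    have := KK_mono n hsr.le hsle
    have h6 : (r ^ (n+1) * Real.exp (-r ^ 2 / 2)) * KK n (s r) ≤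
        (lam * s r ^ (n+1) * Real.exp (-(s r) ^ 2 / 2)) * KK n (s r) := by
      have : r ^ (n+1) * (Real.exp (-r ^ 2 / 2) * KK n (s r)) ≤
        r ^ (n+1) * (Real.exp (-(s r) ^ 2 / 2) * KK n r) := by gcongr
      calc _ = _ := by ring
        _ ≤ _ := this
        _ = (r ^ (n+1) * KK n r) * Real.exp (-(s r) ^ 2 / 2) := by ring
        _ = _ := by rw [← hR]; ring
    have h7 := le_of_mul_le_mul_right h6 h4
    rw [pow_succ r n, pow_succ (s r) n] at h7
    linarith
  refine ⟨hgpos r, hgs.trans ((div_le_iff₀ hr).2 hsc'), hsc', ?_⟩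
  rw [hG]
  field_simp

lemma trial_cont {R : ℝ} {φ φ' : ℝ → ℝ} (h : IsRadialTrial R φ φ') :
    ContinuousOn φ (Icc 0 R) := fun r hr => (h.1 r hr).continuousWithinAt

lemma trial_D_pos (n : ℕ) {R : ℝ} (hR : 0 < R) {φ φ' : ℝ → ℝ} (h : IsRadialTrial R φ φ') :
    0 < ∫ r in Ioo (0 : ℝ) R, φ r ^ 2 * Real.exp (-r ^ 2 / 2) * r ^ n := by
  rw [← integral_Ioc_eq_integral_Ioo, ← intervalIntegral.integral_of_le hR.le]
  have hc := trial_cont h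
  apply intervalIntegral.integral_pos hR
  · fun_prop
  · intro x hx
    have := hx.1.le
    positivity
  · obtain ⟨r, hr, hne⟩ := h.2.2.2.2
    have : r ≠ 0 := by rintro rfl; exact hne h.2.2.1
    have : 0 < r := lt_of_le_of_ne hr.1 this.symm
    exact ⟨r, hr, by positivity⟩

lemma trial_N_int (n : ℕ) (k : ℝ) {R : ℝ} (hR : 0 < R) {φ φ' : ℝ → ℝ}
    (h : IsRadialTrial R φ φ') :
    IntegrableOn (fun r => (φ' r ^ 2 + k * φ r ^ 2 / r ^ 2) * Real.exp (-r ^ 2 / 2) * r ^ n)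
      (Ioo 0 R) := by
  have hc := trial_cont h
  have hc' := h.2.1
  obtain ⟨C, hC⟩ := isCompact_Icc.exists_bound_of_continuousOn hc'
  have hC0 : 0 ≤ C := (norm_nonneg _).trans (hC 0 ⟨le_rfl, hR.le⟩)
  have hb : ∀ r ∈ Icc 0 R, |φ r| ≤ C * r := by
    intro r hr
    have := (convex_Icc 0 R).norm_image_sub_le_of_norm_hasDerivWithin_le h.1 hC
      ⟨le_rfl, hR.le⟩ hr
    simpa [h.2.2.1, abs_of_nonneg hr.1] using this
  have hsub : Ioo 0 R ⊆ Icc 0 R := Ioo_subset_Icc_self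
  refine Integrable.of_bound ?_ ((C ^ 2 + |k| * C ^ 2) * 1 * R ^ n) ?_
  · apply ContinuousOn.aestronglyMeasurable _ measurableSet_Ioo
    have h1 := hc.mono hsub
    have h2 := hc'.mono hsub
    have h3 : ContinuousOn (fun r => k * φ r ^ 2 / r ^ 2) (Ioo 0 R) := by
      apply ContinuousOn.div (by fun_prop) (by fun_prop)
      intro x hx
      have := hx.1.ne'
      positivity
    fun_prop
  · filter_upwards [ae_restrict_mem measurableSet_Ioo] with r hr
    have hr0 := hr.1
    have e1 : |φ' r ^ 2 + k * φ r ^ 2 / r ^ 2| ≤ C ^ 2 + |k| * C ^ 2 := by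
      refine (abs_add_le _ _).trans (add_le_add ?_ ?_)
      · rw [abs_pow]
        have := hC r (hsub hr)
        rw [Real.norm_eq_abs] at this
        gcongr
      · rw [abs_div, abs_mul, abs_pow, abs_pow, abs_of_pos hr0, div_le_iff₀ (by positivity)]
        have := hb r (hsub hr)
        calc |k| * |φ r| ^ 2 ≤ |k| * (C * r) ^ 2 := by gcongr
          _ = _ := by ring
    have e2 : Real.exp (-r ^ 2 / 2) ≤ 1 := by
      rw [Real.exp_le_one_iff]; nlinarith [sq_nonneg r]
    rw [Real.norm_eq_abs, abs_mul, abs_mul, abs_of_pos (Real.exp_pos _), abs_pow,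
      abs_of_pos hr0]
    have := hr.2.le
    gcongr

lemma trial_transport (n : ℕ) (k : ℝ) (hk : 0 ≤ k) {a b : ℝ} (ha : 0 < a) (hab : a < b) :
    ∃ θ : ℝ, 0 < θ ∧ θ < 1 ∧ ∀ φ φ' : ℝ → ℝ, IsRadialTrial a φ φ' →
      ∃ ψ ψ' : ℝ → ℝ, IsRadialTrial b ψ ψ' ∧
      (∫ r in Ioo (0 : ℝ) b, (ψ' r ^ 2 + k * ψ r ^ 2 / r ^ 2) * Real.exp (-r ^ 2 / 2) * r ^ n) /
        (∫ r in Ioo (0 : ℝ) b, ψ r ^ 2 * Real.exp (-r ^ 2 / 2) * r ^ n) ≤ θ *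
      ((∫ r in Ioo (0 : ℝ) a, (φ' r ^ 2 + k * φ r ^ 2 / r ^ 2) * Real.exp (-r ^ 2 / 2) * r ^ n) /
        (∫ r in Ioo (0 : ℝ) a, φ r ^ 2 * Real.exp (-r ^ 2 / 2) * r ^ n)) := by
  obtain ⟨s, g, lam, c, hl, hc0, hc1, hgc, hd, hs0, hsb, hsm, hr⟩ := exists_transport n ha hab
  have hb : 0 < b := ha.trans hab
  have hsc : Continuous s := continuous_iff_continuousAt.2 fun r => (hd r).continuousAt
  refine ⟨c ^ 2, by positivity, by nlinarith, fun φ φ' h => ?_⟩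
  have hmaps : MapsTo s (Icc 0 b) (Icc 0 a) := by
    intro x hx
    exact ⟨by rw [← hs0]; exact hsm.monotone hx.1, by rw [← hsb]; exact hsm.monotone hx.2⟩
  have himg : s '' Ioo 0 b = Ioo 0 a := by
    apply Subset.antisymm
    · rintro _ ⟨x, hx, rfl⟩
      exact ⟨by rw [← hs0]; exact hsm hx.1, by rw [← hsb]; exact hsm hx.2⟩
    · have := intermediate_value_Ioo hb.le hsc.continuousOn
      rwa [hs0, hsb] at this
  have hsurj : Icc 0 a ⊆ s '' Icc 0 b := by
    have := intermediate_value_Icc hb.le hsc.continuousOn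
    rwa [hs0, hsb] at this
  have hψ : IsRadialTrial b (fun r => φ (s r)) (fun r => φ' (s r) * g r) := by
    refine ⟨?_, ?_, ?_, ?_, ?_⟩
    · intro r hr'
      exact (h.1 (s r) (hmaps hr')).comp r (hd r).hasDerivWithinAt hmaps
    · exact (h.2.1.comp hsc.continuousOn hmaps).mul hgc.continuousOn
    · simp only [hs0, h.2.2.1]
    · simp only [hsb, h.2.2.2.1, zero_mul]
    · obtain ⟨x, hx, hne⟩ := h.2.2.2.2
      obtain ⟨y, hy, rfl⟩ := hsurj hx
      exact ⟨y, hy, hne⟩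
  refine ⟨_, _, hψ, ?_⟩
  have hDa := trial_D_pos n ha h
  have hDb := trial_D_pos n hb hψ
  have hder : ∀ x ∈ Ioo 0 b, HasDerivWithinAt s (g x) (Ioo 0 b) x :=
    fun x _ => (hd x).hasDerivWithinAt
  have hcv := fun F : ℝ → ℝ => integral_image_eq_integral_abs_deriv_smul
    measurableSet_Ioo hder hsm.injective.injOn F
  have hD : ∫ r in Ioo (0 : ℝ) b, φ (s r) ^ 2 * Real.exp (-r ^ 2 / 2) * r ^ n =
      lam * ∫ r in Ioo (0 : ℝ) a, φ r ^ 2 * Real.exp (-r ^ 2 / 2) * r ^ n := by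
    rw [← himg, hcv, ← integral_const_mul]
    apply setIntegral_congr_fun measurableSet_Ioo
    intro r hr'
    obtain ⟨h1, h2, h3, h4⟩ := hr r hr'.1
    simp only [abs_of_pos h1, smul_eq_mul]
    rw [mul_assoc, mul_comm (Real.exp _), h4]
    ring
  have hN : ∫ r in Ioo (0 : ℝ) b, ((φ' (s r) * g r) ^ 2 + k * φ (s r) ^ 2 / r ^ 2) *
        Real.exp (-r ^ 2 / 2) * r ^ n ≤ (c ^ 2 * lam) *
      ∫ r in Ioo (0 : ℝ) a, (φ' r ^ 2 + k * φ r ^ 2 / r ^ 2) * Real.exp (-r ^ 2 / 2) * r ^ n := by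
    have hI := trial_N_int n k ha h
    rw [← himg, integrableOn_image_iff_integrableOn_abs_deriv_smul
      measurableSet_Ioo hder hsm.injective.injOn] at hI
    rw [← himg, hcv, ← integral_const_mul]
    apply setIntegral_mono_on (trial_N_int n k hb hψ) (hI.const_mul _) measurableSet_Ioo
    intro r hr'
    obtain ⟨h1, h2, h3, h4⟩ := hr r hr'.1
    have hr0 := hr'.1
    have hsr : 0 < s r := by rw [← hs0]; exact hsm hr0
    simp only [abs_of_pos h1, smul_eq_mul]
    rw [mul_assoc, mul_comm (Real.exp _), h4]
    have e1 : (φ' (s r) * g r) ^ 2 ≤ c ^ 2 * φ' (s r) ^ 2 := by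
      rw [mul_pow, mul_comm]; gcongr
    have e2 : k * φ (s r) ^ 2 / r ^ 2 ≤ c ^ 2 * (k * φ (s r) ^ 2 / s r ^ 2) := by
      rw [← mul_div_assoc, div_le_div_iff₀ (by positivity) (by positivity)]
      have : s r ^ 2 ≤ (c * r) ^ 2 := by gcongr
      calc k * φ (s r) ^ 2 * s r ^ 2 ≤ k * φ (s r) ^ 2 * (c * r) ^ 2 := by gcongr
        _ = _ := by ring
    calc _ ≤ (c ^ 2 * φ' (s r) ^ 2 + c ^ 2 * (k * φ (s r) ^ 2 / s r ^ 2)) *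
          (lam * (s r ^ n * Real.exp (-s r ^ 2 / 2)) * g r) := by gcongr
      _ = _ := by ring
  rw [hD]
  rw [← mul_div_assoc, div_le_div_iff₀ (by positivity) hDa]
  calc _ ≤ _ := mul_le_mul_of_nonneg_right hN hDa.le
    _ = _ := by ring

lemma trial_lower (n : ℕ) (k : ℝ) (hk : 0 ≤ k) {R : ℝ} (hR : 0 < R) {φ φ' : ℝ → ℝ}
    (h : IsRadialTrial R φ φ') :
    k / R ^ 2 ≤ (∫ r in Ioo (0 : ℝ) R,
        (φ' r ^ 2 + k * φ r ^ 2 / r ^ 2) * Real.exp (-r ^ 2 / 2) * r ^ n) /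
        (∫ r in Ioo (0 : ℝ) R, φ r ^ 2 * Real.exp (-r ^ 2 / 2) * r ^ n) := by
  have hD := trial_D_pos n hR h
  rw [le_div_iff₀ hD, ← integral_const_mul]
  have hDi : IntegrableOn (fun r => φ r ^ 2 * Real.exp (-r ^ 2 / 2) * r ^ n) (Ioo 0 R) :=
    not_imp_comm.1 integral_undef hD.ne'
  apply setIntegral_mono_on (hDi.const_mul _) (trial_N_int n k hR h) measurableSet_Ioo
  intro r hr
  have hr0 := hr.1
  have hr1 := hr.2.le
  have : k / R ^ 2 * φ r ^ 2 ≤ φ' r ^ 2 + k * φ r ^ 2 / r ^ 2 := by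
    have e : k / R ^ 2 ≤ k / r ^ 2 := by gcongr
    have := mul_le_mul_of_nonneg_right e (sq_nonneg (φ r))
    have := sq_nonneg (φ' r)
    rw [mul_div_right_comm]
    linarith
  calc _ = k / R ^ 2 * φ r ^ 2 * (Real.exp (-r ^ 2 / 2) * r ^ n) := by ring
    _ ≤ (φ' r ^ 2 + k * φ r ^ 2 / r ^ 2) * (Real.exp (-r ^ 2 / 2) * r ^ n) := by gcongr
    _ = _ := by ring

lemma trial_exists {R : ℝ} (hR : 0 < R) :
    IsRadialTrial R (fun r => 2 * R * r - r ^ 2) (fun r => 2 * R - 2 * r) := by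
  refine ⟨fun r _ => ?_, by fun_prop, by simp, by simp, R, ⟨hR.le, le_rfl⟩, ?_⟩
  · have := ((hasDerivAt_id r).const_mul (2 * R)).sub (hasDerivAt_pow 2 r)
    apply HasDerivAt.hasDerivWithinAt
    convert this using 1
    · ext y
      simp
    · simp
  · have : 0 < R ^ 2 := by positivity
    have e : 2 * R * R - R ^ 2 = R ^ 2 := by ring
    simp only [e]
    exact this.ne'

/-- **Lemma 2.1.** For `m ≥ 2`, the first nonzero Neumann eigenvalue
`μ₁(B_R)` is strictly decreasing in the radius `R`: for `0 < a < b`, one has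
`μ₁(B_b) < μ₁(B_a)`. -/
theorem mu1Ball_strictAnti (m : ℕ) (hm : 2 ≤ m) :
    ∀ a b : ℝ, 0 < a → a < b → mu1Ball m b < mu1Ball m a := by

  intro a b ha hab
  have hm1 : (0 : ℝ) < (m : ℝ) - 1 := by
    have : (2 : ℝ) ≤ m := by exact_mod_cast hm
    linarith
  have hb := ha.trans hab
  obtain ⟨θ, hθ0, hθ1, hθ⟩ := trial_transport (m - 1) ((m : ℝ) - 1) hm1.le ha hab
  have hpos : ((m : ℝ) - 1) / a ^ 2 ≤ mu1Ball m a := by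
    unfold mu1Ball
    refine le_csInf ⟨_, _, _, trial_exists ha, rfl⟩ ?_
    rintro q ⟨φ, φ', h, rfl⟩
    exact trial_lower (m - 1) _ hm1.le ha h
  have hpos' : 0 < mu1Ball m a := lt_of_lt_of_le (by positivity) hpos
  have hle : mu1Ball m b / θ ≤ mu1Ball m a := by
    refine le_csInf (s := { q : ℝ | ∃ φ φ' : ℝ → ℝ, IsRadialTrial a φ φ' ∧ _ }) ⟨_, _, _, trial_exists ha, rfl⟩ ?_
    rintro q ⟨φ, φ', h, rfl⟩
    obtain ⟨ψ, ψ', hψ, hq⟩ := hθ φ φ' h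
    rw [div_le_iff₀' hθ0]
    refine le_trans (csInf_le ⟨((m : ℝ) - 1) / b ^ 2, ?_⟩ ⟨ψ, ψ', hψ, rfl⟩) hq
    rintro q ⟨φ, φ', h, rfl⟩
    exact trial_lower (m - 1) _ hm1.le hb h
  rw [div_le_iff₀ hθ0] at hle
  nlinarith
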